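/- For every integer t ≥ 2 there exist a constant c > 0 and n₀ ∈ ℕ such that for all integers n > n₀: IR(2K₂, K_{1,n}) ≤ n + c·n·(log n)^{−1/4}, IR(P₄, K_{1,n}) ≤ n + c·n·(log n)^{−1/4}, and IR(K_{t,t}, K_{1,n}) ≤ n + c·n^{1 − 1/(2t)}. -/

import Mathlib

open SimpleGraph

def ArrowsInd {V α β : Type*} (F : SimpleGraph V) (H : SimpleGraph α) (G : SimpleGraph β) : Prop :=
  ∀ c : Sym2 V → Bool,
    (∃ f : H ↪g F, ∀ u v, H.Adj u v → c s(f u, f v) = true) ∨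
    (∃ g : G ↪g F, ∀ u v, G.Adj u v → c s(g u, g v) = false)

noncomputable def IR {α β : Type*} (H : SimpleGraph α) (G : SimpleGraph β) : ℕ :=
  sInf {N : ℕ | ∃ F : SimpleGraph (Fin N), ArrowsInd F H G}

def StarGraph (n : ℕ) : SimpleGraph (Fin 1 ⊕ Fin n) := completeBipartiteGraph (Fin 1) (Fin n)

/-- The graph 2K₂ consisting of two disjoint edges. -/
def TwoK2 : SimpleGraph (Fin 4) :=
  SimpleGraph.fromEdgeSet {s((0 : Fin 4), (1 : Fin 4)), s((2 : Fin 4), (3 : Fin 4))}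
/-!
All hosts are bipartite. If no vertex on the left is the centre of a blue star with `n` leaves, then
each red degree on the left falls short of the full degree by less than `n`, so a host whose left
degrees are `n + d` has more than `d` red edges at every left vertex.

For `K_{t,t}` the host is complete bipartite with about `n ^ (1 / (t + 1))` vertices on the left,
and the red graph is dense enough for a Kővári–Sós–Turán count.

For `2K₂` and `P₄` the copy has to be induced, so non-edges are needed as well. The left vertices
are the positions of words over an alphabet of `q + 1` letters and a position is joined to the words
whose letter there is nonzero. Any `q ^ 2` positions have a proportion of at most
`(q / (q + 1)) ^ (q ^ 2) ≤ 1 / (q + 1)` of the words as common neighbours. Since this is below the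
red degree, every left vertex has a red edge to a non-neighbour of one of any `q ^ 2` positions.
About `q ^ 3` positions suffice, so the host has at least `q ^ (q ^ 3)` vertices, which allows `q`
to be of order `(log n) ^ (1 / 4)`, and its size exceeds `n` by a factor `1 + O(1 / q)`.
-/


/-- The bipartite graph of a relation `r`: `a` and `b` are adjacent when `r a b`. All host graphs
and all target graphs below are presented in this form. -/
def bipartiteGraphOfRel {A B : Type*} (r : A → B → Prop) : SimpleGraph (A ⊕ B) where
  Adj
    | .inl a, .inr b => r a b
    | .inr b, .inl a => r a b
    | _, _ => False
  symm := ⟨by rintro (a | b) (a' | b') h <;> exact h⟩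
  loopless := ⟨by rintro (a | b) h <;> exact h⟩

/-- For a relation `R ≤ r`, thought of as the red edges of the bipartite graph of `r`: the bipartite
graph of `p` embeds as an induced subgraph, respecting the two sides, with all its edges red. -/
def HasRedCopy {I J A B : Type*} (p : I → J → Prop) (r R : A → B → Prop) : Prop :=
  ∃ (f : I ↪ A) (g : J ↪ B), ∀ i j, (r (f i) (g j) ↔ p i j) ∧ (p i j → R (f i) (g j))

section BipartiteHosts

open Finset

variable {I J A B V α α' β : Type*} {p : I → J → Prop} {r : A → B → Prop} {n : ℕ}

@[simp] theorem bipartiteGraphOfRel_adj_inl_inl {a a' : A} :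
    ¬(bipartiteGraphOfRel r).Adj (.inl a) (.inl a') := id

@[simp] theorem bipartiteGraphOfRel_adj_inl_inr {a : A} {b : B} :
    (bipartiteGraphOfRel r).Adj (.inl a) (.inr b) ↔ r a b := Iff.rfl

@[simp] theorem bipartiteGraphOfRel_adj_inr_inl {a : A} {b : B} :
    (bipartiteGraphOfRel r).Adj (.inr b) (.inl a) ↔ r a b := Iff.rfl

@[simp] theorem bipartiteGraphOfRel_adj_inr_inr {b b' : B} :
    ¬(bipartiteGraphOfRel r).Adj (.inr b) (.inr b') := id

theorem bipartiteGraphOfRel_true :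
    bipartiteGraphOfRel (fun (_ : A) (_ : B) ↦ True) = completeBipartiteGraph A B := by
  ext (a | b) (a' | b') <;> simp

theorem ArrowsInd.mono_left {F : SimpleGraph V} {H : SimpleGraph α} {H' : SimpleGraph α'}
    {G : SimpleGraph β} (h : ArrowsInd F H G) (e : H' ↪g H) : ArrowsInd F H' G := fun c ↦
  (h c).imp_left fun ⟨f, hf⟩ ↦ ⟨f.comp e, fun _ _ huv ↦ hf _ _ (e.map_adj_iff.2 huv)⟩

theorem ArrowsInd.IR_le_card [Fintype V] {F : SimpleGraph V} {H : SimpleGraph α}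
    {G : SimpleGraph β} (h : ArrowsInd F H G) : IR H G ≤ Fintype.card V := by
  let e := Fintype.equivFin V
  let i : F ≃g F.map e.toEmbedding := SimpleGraph.Iso.map e F
  refine Nat.sInf_le ⟨F.map e.toEmbedding, fun c ↦ ?_⟩
  exact (h fun z ↦ c (z.map e)).imp
    (fun ⟨f, hf⟩ ↦ ⟨f.trans i.toEmbedding, hf⟩) (fun ⟨f, hf⟩ ↦ ⟨f.trans i.toEmbedding, hf⟩)

theorem exists_monochromatic_embedding {c : Sym2 (A ⊕ B) → Bool} {χ : Bool} (f : I ↪ A)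
    (g : J ↪ B) (hr : ∀ i j, r (f i) (g j) ↔ p i j)
    (hc : ∀ i j, p i j → c s(.inl (f i), .inr (g j)) = χ) :
    ∃ φ : bipartiteGraphOfRel p ↪g bipartiteGraphOfRel r,
      ∀ u v, (bipartiteGraphOfRel p).Adj u v → c s(φ u, φ v) = χ := by
  refine ⟨⟨f.sumMap g, ?_⟩, ?_⟩
  · rintro (i | j) (i' | j') <;> simp [hr]
  · rintro (i | j) (i' | j') huv
    · exact huv.elim
    · exact hc _ _ huv
    · exact Sym2.eq_swap ▸ hc _ _ huv
    · exact huv.elim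

open scoped Classical in
/-- If no vertex on the left has `n` blue edges, the red degrees fall short of the degrees by less
than `n`; this is all that the red copies are extracted from. -/
theorem arrowsInd_starGraph [Fintype B]
    (h : ∀ R ≤ r, (∀ a, #{b | r a b} < #{b | R a b} + n) → HasRedCopy p r R) :
    ArrowsInd (bipartiteGraphOfRel r) (bipartiteGraphOfRel p) (StarGraph n) := by
  intro c
  by_cases hblue : ∃ a, n ≤ #{b | r a b ∧ c s(.inl a, .inr b) = false}
  · right
    obtain ⟨a, ha⟩ := hblue
    obtain ⟨g, hg⟩ := Function.Embedding.exists_of_card_le_finset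
      (α := Fin n) ((Fintype.card_fin n).trans_le ha)
    replace hg : ∀ i, r a (g i) ∧ c s(.inl a, .inr (g i)) = false := by
      simpa [Set.range_subset_iff] using hg
    rw [StarGraph, ← bipartiteGraphOfRel_true]
    exact exists_monochromatic_embedding ⟨fun _ ↦ a, fun _ _ _ ↦ Subsingleton.elim _ _⟩ g
      (fun _ j ↦ iff_true_intro (hg j).1) (fun _ j _ ↦ (hg j).2)
  · left
    push Not at hblue
    let R : A → B → Prop := fun a b ↦ r a b ∧ c s(.inl a, .inr b) = true
    have hsplit (a : A) :
        #{b | R a b} + #{b | r a b ∧ c s(.inl a, .inr b) = false} = #{b | r a b} := by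
      rw [← card_filter_add_card_filter_not (s := {b | r a b})
        (fun b ↦ c s(.inl a, .inr b) = true), filter_filter, filter_filter]
      simp only [R, Bool.not_eq_true]
    obtain ⟨f, g, hfg⟩ := h R (fun _ _ h ↦ h.1)
      fun a ↦ by convert hsplit a ▸ Nat.add_lt_add_left (hblue a) #{b | R a b}
    exact exists_monochromatic_embedding f g (fun i j ↦ (hfg i j).1) fun i j hp ↦ ((hfg i j).2 hp).2

open scoped Classical in
theorem IR_starGraph_le [Fintype A] [Fintype B] {H : SimpleGraph α}
    (e : H ↪g bipartiteGraphOfRel p)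
    (h : ∀ R ≤ r, (∀ a, #{b | r a b} < #{b | R a b} + n) → HasRedCopy p r R) :
    IR H (StarGraph n) ≤ Fintype.card A + Fintype.card B :=
  Fintype.card_sum (α := A) (β := B) ▸ ((arrowsInd_starGraph h).mono_left e).IR_le_card

end BipartiteHosts

section CompleteBipartite

open Finset

variable {A B : Type*} [Fintype A] [Fintype B] {R : A → B → Prop} [DecidableRel R]

theorem sum_card_le_mul_add_mul_card_filter (u : ℕ) :
    ∑ a, #{b | R a b} ≤
      u * Fintype.card B + Fintype.card A * #{b | u ≤ #{a | R a b}} := by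
  calc ∑ a, #{b | R a b} = ∑ b, #{a | R a b} :=
        sum_card_bipartiteAbove_eq_sum_card_bipartiteBelow R
    _ ≤ ∑ b, (u + if u ≤ #{a | R a b} then Fintype.card A else 0) := by
        refine sum_le_sum fun b _ ↦ ?_
        split_ifs with h
        · exact (card_le_univ _).trans (Nat.le_add_left _ _)
        · omega
    _ = u * Fintype.card B + Fintype.card A * #{b | u ≤ #{a | R a b}} := by
        rw [sum_add_distrib, ← sum_filter]
        simp [mul_comm]

theorem exists_complete_pair_of_card_filter {u t : ℕ}
    (h : t * (Fintype.card A).choose u < #{b | u ≤ #{a | R a b}}) :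
    ∃ (S : Finset A) (T : Finset B), #S = u ∧ t < #T ∧ ∀ a ∈ S, ∀ b ∈ T, R a b := by
  by_contra! hno
  have hfew : ∀ S ∈ powersetCard u (univ : Finset A),
      #(bipartiteAbove (fun S b ↦ ∀ a ∈ S, R a b) {b | u ≤ #{a | R a b}} S) ≤ t := by
    intro S hS
    by_contra! hlt
    obtain ⟨a, ha, b, hb, hR⟩ := hno S _ (mem_powersetCard.1 hS).2 hlt
    exact hR (((mem_bipartiteAbove _).1 hb).2 a ha)
  have hsome : ∀ b ∈ ({b | u ≤ #{a | R a b}} : Finset B),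
      1 ≤ #(bipartiteBelow (fun S b ↦ ∀ a ∈ S, R a b) (powersetCard u (univ : Finset A)) b) := by
    intro b hb
    obtain ⟨S, hSR, hS⟩ := exists_subset_card_eq (mem_filter.1 hb).2
    refine card_pos.2 ⟨S, (mem_bipartiteBelow _).2 ⟨mem_powersetCard.2 ⟨subset_univ S, hS⟩, ?_⟩⟩
    exact fun a ha ↦ (mem_filter.1 (hSR ha)).2
  have := card_mul_le_card_mul' _ hsome hfew
  rw [card_powersetCard, card_univ] at this
  linarith

/-- A Kővári–Sós–Turán count, with the convexity step replaced by discarding the right-hand vertices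
of degree less than `u`. -/
theorem exists_complete_pair {u t : ℕ}
    (h : u * Fintype.card B + Fintype.card A * (t * (Fintype.card A).choose u) <
      ∑ a, #{b | R a b}) :
    ∃ (S : Finset A) (T : Finset B), #S = u ∧ t < #T ∧ ∀ a ∈ S, ∀ b ∈ T, R a b := by
  apply exists_complete_pair_of_card_filter
  exact lt_of_mul_lt_mul_left' (a := Fintype.card A)
    (by have := sum_card_le_mul_add_mul_card_filter (R := R) u; omega)

theorem IR_completeBipartiteGraph_starGraph_le {u t n a b : ℕ}
    (h : u * b + a * (t * a.choose u) + a * n < a * (b + 1)) :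
    IR (completeBipartiteGraph (Fin u) (Fin t)) (StarGraph n) ≤ a + b := by
  classical
  rw [← bipartiteGraphOfRel_true]
  rw [← Fintype.card_fin a, ← Fintype.card_fin b]
  refine IR_starGraph_le (r := fun _ _ ↦ True) Embedding.refl fun R _ hR ↦ ?_
  simp only [filter_true, card_univ, Fintype.card_fin] at hR
  have hdeg : a * (b + 1) ≤ ∑ x, #{y | R x y} + a * n := by
    calc a * (b + 1) = ∑ x : Fin a, (b + 1) := by simp
      _ ≤ ∑ x, (#{y | R x y} + n) := sum_le_sum fun x _ ↦ hR x
      _ = ∑ x, #{y | R x y} + a * n := by simp [sum_add_distrib]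
  obtain ⟨S, T, hS, hT, hST⟩ := exists_complete_pair (R := R) (u := u) (t := t)
    (by simp only [Fintype.card_fin]; omega)
  obtain ⟨f, hf⟩ := Function.Embedding.exists_of_card_le_finset (α := Fin u) (s := S) (by simp [hS])
  obtain ⟨g, hg⟩ := Function.Embedding.exists_of_card_le_finset (α := Fin t) (s := T)
    (by simp [hT.le])
  exact ⟨f, g, fun i j ↦ ⟨Iff.rfl, fun _ ↦ hST _ (hf ⟨i, rfl⟩) _ (hg ⟨j, rfl⟩)⟩⟩

end CompleteBipartite

open scoped Classical Finset in
/-- The expansion property of the hosts for `2K₂` and `P₄`: any `m` vertices on the left have at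
most `d` common neighbours. -/
def FewCommonNeighbors {A B : Type*} [Fintype B] (r : A → B → Prop) (m d : ℕ) : Prop :=
  ∀ S : Finset A, m ≤ #S → #{b | ∀ a ∈ S, r a b} ≤ d

section FewCommonNeighbors

open Finset

variable {A B : Type*} [Fintype B] {r R : A → B → Prop} {m d : ℕ}

open scoped Classical in
theorem FewCommonNeighbors.exists_mem_not_rel (hr : FewCommonNeighbors r m d) {a : A}
    (ha : d < #{b | R a b}) {S : Finset A} (hS : m ≤ #S) : ∃ a' ∈ S, ∃ b, R a b ∧ ¬r a' b := by
  by_contra! hcommon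
  exact (ha.trans_le (card_le_card (monotone_filter_right _
    fun b _ hb a' ha' ↦ hcommon a' ha' b hb))).not_ge (hr S hS)

variable [Fintype A] [Nonempty A]

theorem exists_card_le_two_mul_card_of_total {T : A → A → Prop} [DecidableRel T]
    (hT : ∀ a a', T a a' ∨ T a' a) : ∃ a, Fintype.card A ≤ 2 * #{a' | T a a'} := by
  classical
  have hswap : ∑ a, #{a' | T a' a} = ∑ a, #{a' | T a a'} :=
    (sum_card_bipartiteAbove_eq_sum_card_bipartiteBelow T).symm
  have hcover (a : A) : Fintype.card A ≤ #{a' | T a a'} + #{a' | T a' a} := by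
    refine le_of_eq_of_le ?_ (card_union_le _ _)
    rw [← filter_or, filter_true_of_mem fun a' _ ↦ hT a a', card_univ]
  obtain ⟨a, -, ha⟩ : ∃ a ∈ univ, Fintype.card A ≤ 2 * #{a' | T a a'} := by
    refine exists_le_of_sum_le univ_nonempty ?_
    calc ∑ _a : A, Fintype.card A ≤ ∑ a, (#{a' | T a a'} + #{a' | T a' a}) :=
          sum_le_sum fun a _ ↦ hcover a
      _ = ∑ a, 2 * #{a' | T a a'} := by rw [sum_add_distrib, hswap, ← mul_sum, two_mul]
  exact ⟨a, ha⟩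

open scoped Classical in
/-- If no two left vertices were separated in both directions, then separation failing would be a
total relation, and some vertex would fail to be separated from `m` others. -/
theorem FewCommonNeighbors.hasRedCopy_eq (hr : FewCommonNeighbors r m d)
    (hm : 2 * m ≤ Fintype.card A) (hRr : R ≤ r) (hR : ∀ a, d < #{b | R a b}) :
    HasRedCopy (fun i j : Fin 2 ↦ i = j) r R := by
  obtain ⟨a, a', ⟨b, hab, hab'⟩, b', ha'b', ha'b⟩ :
      ∃ a a', (∃ b, R a b ∧ ¬r a' b) ∧ ∃ b, R a' b ∧ ¬r a b := by
    by_contra! hno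
    obtain ⟨a, ha⟩ := exists_card_le_two_mul_card_of_total
      (T := fun a a' ↦ ∀ b, R a b → r a' b) fun a a' ↦ by
        by_cases h : ∃ b, R a b ∧ ¬r a' b
        · exact .inr (hno a a' h)
        · exact .inl (by simpa using h)
    have hmany : m ≤ #{a' | ∀ b, R a b → r a' b} := by omega
    obtain ⟨a', ha', b, hab, ha'b⟩ := hr.exists_mem_not_rel (hR a) hmany
    exact ha'b ((mem_filter.1 ha').2 b hab)
  have haa' : a ≠ a' := by rintro rfl; exact ha'b (hRr _ _ ha'b')
  have hbb' : b ≠ b' := by rintro rfl; exact ha'b (hRr _ _ hab)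
  refine ⟨.embFinTwo haa', .embFinTwo hbb', ?_⟩
  simp [Fin.forall_fin_two, Function.Embedding.embFinTwo_apply_zero,
    Function.Embedding.embFinTwo_apply_one, hab, hab', ha'b', ha'b, hRr _ _ hab, hRr _ _ ha'b']

open scoped Classical in
theorem exists_lt_card_of_mul_le (hm : m * Fintype.card B ≤ Fintype.card A * d)
    (hR : ∀ a, d < #{b | R a b}) : ∃ b, m < #{a | R a b} := by
  have hlt : ∑ _b : B, m < ∑ b, #{a | R a b} := by
    calc ∑ _b : B, m ≤ ∑ _a : A, d := by simpa [mul_comm] using hm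
      _ < ∑ a, #{b | R a b} := sum_lt_sum_of_nonempty univ_nonempty fun a _ ↦ hR a
      _ = ∑ b, #{a | R a b} := sum_card_bipartiteAbove_eq_sum_card_bipartiteBelow R
  obtain ⟨b, -, hb⟩ := exists_lt_of_sum_lt hlt
  exact ⟨b, hb⟩

open scoped Classical in
theorem FewCommonNeighbors.hasRedCopy_le (hr : FewCommonNeighbors r m d)
    (hm : m * Fintype.card B ≤ Fintype.card A * d) (hRr : R ≤ r) (hR : ∀ a, d < #{b | R a b}) :
    HasRedCopy (fun i j : Fin 2 ↦ i ≤ j) r R := by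
  obtain ⟨b, hb⟩ := exists_lt_card_of_mul_le hm hR
  obtain ⟨a, ha⟩ := card_pos.1 (Nat.zero_lt_of_lt hb)
  have hab : R a b := (mem_filter.1 ha).2
  obtain ⟨a', ha', b', hab', ha'b'⟩ := hr.exists_mem_not_rel (hR a) hb.le
  have ha'b : R a' b := (mem_filter.1 ha').2
  have haa' : a ≠ a' := by rintro rfl; exact ha'b' (hRr _ _ hab')
  have hbb' : b' ≠ b := by rintro rfl; exact ha'b' (hRr _ _ ha'b)
  refine ⟨.embFinTwo haa', .embFinTwo hbb', ?_⟩
  simp [Fin.forall_fin_two, Function.Embedding.embFinTwo_apply_zero,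
    Function.Embedding.embFinTwo_apply_one, ha'b', hab', hab, ha'b, hRr _ _ hab, hRr _ _ hab',
    hRr _ _ ha'b]

/-- Two disjoint edges as the bipartite graph of equality on `Fin 2`, used to embed `2K₂` into a
bipartite host. -/
def twoK2Embedding : TwoK2 ↪g bipartiteGraphOfRel fun i j : Fin 2 ↦ i = j where
  toFun := ![.inl 0, .inr 0, .inl 1, .inr 1]
  inj' := by decide
  map_rel_iff' {u v} := by fin_cases u <;> fin_cases v <;> simp [TwoK2]

/-- The path `1 - 1 - 0 - 0`, alternating between the sides, as the bipartite graph of `≤` on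
`Fin 2`, used to embed `P₄` into a bipartite host. -/
def pathGraphFourEmbedding : pathGraph 4 ↪g bipartiteGraphOfRel fun i j : Fin 2 ↦ i ≤ j where
  toFun := ![.inl 1, .inr 1, .inl 0, .inr 0]
  inj' := by decide
  map_rel_iff' {u v} := by fin_cases u <;> fin_cases v <;> simp [pathGraph_adj]

open scoped Classical in
theorem FewCommonNeighbors.IR_twoK2_le {n : ℕ} (hr : FewCommonNeighbors r m d)
    (hm : 2 * m ≤ Fintype.card A) (hdeg : ∀ a, n + d ≤ #{b | r a b}) :
    IR TwoK2 (StarGraph n) ≤ Fintype.card A + Fintype.card B :=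
  IR_starGraph_le twoK2Embedding fun _ hRr hR ↦
    hr.hasRedCopy_eq hm hRr fun a ↦ by linarith [hdeg a, hR a]

open scoped Classical in
theorem FewCommonNeighbors.IR_pathGraph_four_le {n : ℕ} (hr : FewCommonNeighbors r m d)
    (hm : m * Fintype.card B ≤ Fintype.card A * d) (hdeg : ∀ a, n + d ≤ #{b | r a b}) :
    IR (pathGraph 4) (StarGraph n) ≤ Fintype.card A + Fintype.card B :=
  IR_starGraph_le pathGraphFourEmbedding fun _ hRr hR ↦
    hr.hasRedCopy_le hm hRr fun a ↦ by linarith [hdeg a, hR a]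

end FewCommonNeighbors

/-- The host relation for `2K₂` and `P₄`: a position `a` is joined to the words over `Fin (q + 1)`
whose letter at `a` is nonzero, each word being repeated once for every element of `κ`. So each
position misses a proportion `1 / (q + 1)` of the right side, independently of the others. -/
def wordRel (ι κ : Type*) (q : ℕ) (a : ι) (b : (ι → Fin (q + 1)) × κ) : Prop :=
  b.1 a ≠ 0

theorem pow_le_succ_pow_pred {q s : ℕ} (h : q ^ 2 ≤ s) : q ^ s ≤ (q + 1) ^ (s - 1) := by
  match s with
  | 0 => obtain rfl : q = 0 := by simpa using h
         simp
  | 1 => simpa using (show q ≤ 1 by nlinarith)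
  | j + 2 =>
    calc q ^ (j + 2) = q ^ 2 * q ^ j := by ring
      _ ≤ (q + (j + 1)) * q ^ j := by
        gcongr
        obtain rfl | hq := q.eq_zero_or_pos <;> nlinarith
      _ = q ^ (j + 1) + (j + 1) * q ^ j := by ring
      _ ≤ (q + 1) ^ (j + 1) := by
        simpa using pow_add_mul_le_add_pow (a := q) (b := 1) (by simp) (by simp) (j + 1)

section WordRel

open Finset

variable {ι κ : Type*} [Fintype ι] [DecidableEq ι] [Fintype κ] {q : ℕ}

theorem card_forall_wordRel (S : Finset ι) [DecidablePred fun b ↦ ∀ a ∈ S, wordRel ι κ q a b] :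
    #{b | ∀ a ∈ S, wordRel ι κ q a b} =
      q ^ #S * (q + 1) ^ (Fintype.card ι - #S) * Fintype.card κ := by
  have hprod : ({b | ∀ a ∈ S, wordRel ι κ q a b} : Finset _) =
      Fintype.piFinset (fun a ↦ if a ∈ S then {(0 : Fin (q + 1))}ᶜ else univ) ×ˢ univ := by
    ext b
    rw [mem_filter_univ, mem_product, and_iff_left (mem_univ _), Fintype.mem_piFinset]
    refine forall_congr' fun a ↦ ?_
    by_cases ha : a ∈ S <;> simp [ha, wordRel]
  rw [hprod, card_product, Fintype.card_piFinset, card_univ]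
  simp [apply_ite, prod_ite, card_compl, filter_not, card_sdiff]

theorem fewCommonNeighbors_wordRel :
    FewCommonNeighbors (wordRel ι κ q) (q ^ 2)
      ((q + 1) ^ (Fintype.card ι - 1) * Fintype.card κ) := by
  obtain rfl | hq := q.eq_zero_or_pos
  · exact fun S _ ↦ (card_le_univ _).trans (by simp)
  intro S hS
  rw [card_forall_wordRel]
  gcongr ?_ * _
  calc q ^ #S * (q + 1) ^ (Fintype.card ι - #S)
      ≤ (q + 1) ^ (#S - 1) * (q + 1) ^ (Fintype.card ι - #S) := by
        exact Nat.mul_le_mul_right _ (pow_le_succ_pow_pred hS)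
    _ ≤ (q + 1) ^ (Fintype.card ι - 1) := by
        rw [← pow_add]
        have hcard := card_le_univ S
        have hpos : 0 < #S := hS.trans_lt' (by positivity)
        exact Nat.pow_le_pow_right q.succ_pos (by omega)

theorem card_wordRel (a : ι) [DecidablePred (wordRel ι κ q a)] :
    #{b | wordRel ι κ q a b} = q * (q + 1) ^ (Fintype.card ι - 1) * Fintype.card κ := by
  classical simpa using card_forall_wordRel (κ := κ) (q := q) {a}

variable {p j L n : ℕ}

theorem add_le_card_wordRel (hn : n ≤ p * (p + 2) ^ j * L) (a : Fin (j + 1))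
    [DecidablePred (wordRel (Fin (j + 1)) (Fin L) (p + 1) a)] :
    n + (p + 2) ^ j * L ≤ #{b | wordRel (Fin (j + 1)) (Fin L) (p + 1) a b} := by
  rw [card_wordRel, Fintype.card_fin, Fintype.card_fin, Nat.add_sub_cancel]
  calc n + (p + 2) ^ j * L ≤ p * (p + 2) ^ j * L + (p + 2) ^ j * L := by gcongr
    _ = (p + 1) * (p + 1 + 1) ^ j * L := by ring

theorem IR_twoK2_starGraph_le (hj : 2 * (p + 1) ^ 2 ≤ j + 1) (hn : n ≤ p * (p + 2) ^ j * L) :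
    IR TwoK2 (StarGraph n) ≤ j + 1 + (p + 2) ^ (j + 1) * L := by
  simpa using (fewCommonNeighbors_wordRel (ι := Fin (j + 1)) (κ := Fin L)).IR_twoK2_le
    (by simpa using hj) fun a ↦ by classical simpa using add_le_card_wordRel hn a

theorem IR_pathGraph_four_starGraph_le (hj : (p + 1) ^ 2 * (p + 2) ≤ j + 1)
    (hn : n ≤ p * (p + 2) ^ j * L) :
    IR (pathGraph 4) (StarGraph n) ≤ j + 1 + (p + 2) ^ (j + 1) * L := by
  have hedges : (p + 1) ^ 2 * ((p + 2) ^ (j + 1) * L) ≤ (j + 1) * ((p + 2) ^ j * L) := by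
    calc (p + 1) ^ 2 * ((p + 2) ^ (j + 1) * L)
        = (p + 1) ^ 2 * (p + 2) * ((p + 2) ^ j * L) := by ring
      _ ≤ (j + 1) * ((p + 2) ^ j * L) := by gcongr
  simpa using (fewCommonNeighbors_wordRel (ι := Fin (j + 1)) (κ := Fin L)).IR_pathGraph_four_le
    (by simpa using hedges) fun a ↦ by classical simpa using add_le_card_wordRel hn a

end WordRel

section Asymptotics

open Filter

theorem exists_repetition {p j n : ℕ} (hp : 0 < p) (hn : (p + 2) ^ (j + 2) ≤ n) :
    ∃ L : ℕ, n ≤ p * (p + 2) ^ j * L ∧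
      ((j + 1 + (p + 2) ^ (j + 1) * L : ℕ) : ℝ) ≤ n + 4 * n / p := by
  have hsmall : ((p + 2) ^ (j + 1) : ℝ) ≤ n / p := by
    rw [le_div_iff₀ (by positivity)]
    have hmul : (p + 2) ^ (j + 1) * p ≤ n := calc
      (p + 2) ^ (j + 1) * p ≤ (p + 2) ^ (j + 1) * (p + 2) := by gcongr; omega
      _ = (p + 2) ^ (j + 2) := (pow_succ _ _).symm
      _ ≤ n := hn
    exact_mod_cast hmul
  have hleft : (j + 1 : ℝ) ≤ (p + 2) ^ (j + 1) := by
    exact_mod_cast (Nat.lt_pow_self (n := j + 1) (show 1 < p + 2 by omega)).le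
  let y : ℝ := n / (p * (p + 2) ^ j)
  refine ⟨⌈y⌉₊, ?_, ?_⟩
  · have hceil : (n : ℝ) ≤ p * (p + 2) ^ j * ⌈y⌉₊ :=
      (div_le_iff₀' (by positivity)).1 (Nat.le_ceil y)
    exact_mod_cast hceil
  · push_cast
    calc (j + 1 + (p + 2) ^ (j + 1) * ⌈y⌉₊ : ℝ)
        ≤ (p + 2) ^ (j + 1) + (p + 2) ^ (j + 1) * (y + 1) := by
          gcongr
          exact (Nat.ceil_lt_add_one (by positivity)).le
      _ = n + 2 * (n / p) + 2 * (p + 2) ^ (j + 1) := by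
          simp only [y]
          field_simp
          ring
      _ ≤ n + 2 * (n / p) + 2 * (n / p) := by gcongr
      _ = n + 4 * n / p := by ring

theorem pow_le_two_pow_pow_four (p : ℕ) :
    (p + 2) ^ ((p + 1) ^ 2 * (p + 2) + 1) ≤ 2 ^ (p + 2) ^ 4 := by
  calc (p + 2) ^ ((p + 1) ^ 2 * (p + 2) + 1) ≤ (p + 2) ^ (p + 2) ^ 3 :=
        Nat.pow_le_pow_right (by omega) (by nlinarith)
    _ ≤ (2 ^ (p + 2)) ^ (p + 2) ^ 3 := Nat.pow_le_pow_left Nat.lt_two_pow_self.le _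
    _ = 2 ^ (p + 2) ^ 4 := by rw [← pow_mul]; ring

theorem exists_alphabet {n : ℕ} (hn : 0 < n) (hl : 6 ^ 4 ≤ Real.logb 2 n) :
    ∃ p : ℕ, 0 < p ∧ (p + 2) ^ ((p + 1) ^ 2 * (p + 2) + 1) ≤ n ∧
      4 * (n : ℝ) / p ≤ 8 * n * Real.logb 2 n ^ (-(1 / 4 : ℝ)) := by
  set l := Real.logb 2 n
  have hl0 : 0 ≤ l := hl.trans' (by norm_num)
  set x := l ^ (1 / 4 : ℝ) with hx
  have hx4 : x ^ 4 = l := by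
    rw [hx, one_div]
    exact_mod_cast Real.rpow_inv_natCast_pow hl0 four_ne_zero
  have hx6 : 6 ≤ x := le_of_pow_le_pow_left₀ four_ne_zero (by positivity) (hx4 ▸ hl)
  obtain ⟨p, hp⟩ : ∃ p, ⌊x⌋₊ = p + 2 :=
    Nat.exists_eq_add_of_le' (Nat.le_floor (by norm_num; linarith))
  have hpx : (p + 2 : ℝ) ≤ x := by exact_mod_cast hp ▸ Nat.floor_le (by positivity)
  have hxp : x / 2 ≤ p := by
    have hlt := Nat.lt_floor_add_one x
    rw [hp] at hlt
    push_cast at hlt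
    linarith
  have hp0 : (0 : ℝ) < p := by linarith
  refine ⟨p, by exact_mod_cast hp0, (pow_le_two_pow_pow_four p).trans ?_, ?_⟩
  · have hpow : (2 : ℝ) ^ ((p + 2) ^ 4 : ℕ) ≤ n := by
      rw [← Real.rpow_natCast, ← Real.le_logb_iff_rpow_le one_lt_two (by positivity)]
      push_cast
      calc ((p + 2) ^ 4 : ℝ) ≤ x ^ 4 := by gcongr
        _ = l := hx4
    exact_mod_cast hpow
  · rw [Real.rpow_neg hl0, ← hx, ← div_eq_mul_inv, div_le_div_iff₀ hp0 (by linarith)]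
    nlinarith [(n.cast_nonneg : (0 : ℝ) ≤ n)]

theorem eventually_exists_wordRel_parameters :
    ∀ᶠ n : ℕ in atTop, ∃ p j L : ℕ, (p + 1) ^ 2 * (p + 2) ≤ j + 1 ∧ n ≤ p * (p + 2) ^ j * L ∧
      ((j + 1 + (p + 2) ^ (j + 1) * L : ℕ) : ℝ) ≤
        n + 8 * n * Real.logb 2 n ^ (-(1 / 4 : ℝ)) := by
  have hlog : Tendsto (fun n : ℕ ↦ Real.logb 2 n) atTop atTop :=
    (Real.tendsto_logb_atTop one_lt_two).comp tendsto_natCast_atTop_atTop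
  filter_upwards [eventually_gt_atTop 0, hlog.eventually_ge_atTop (6 ^ 4)] with n hn hl
  obtain ⟨p, hp, hpn, hbound⟩ := exists_alphabet hn hl
  obtain ⟨j, hj⟩ : ∃ j, (p + 1) ^ 2 * (p + 2) = j + 1 :=
    Nat.exists_eq_succ_of_ne_zero (by positivity)
  rw [hj] at hpn
  obtain ⟨L, hL, hcard⟩ := exists_repetition hp hpn
  exact ⟨p, j, L, hj.le, hL, hcard.trans (by gcongr)⟩

theorem eventually_IR_twoK2_starGraph_le :
    ∀ᶠ n : ℕ in atTop,
      (IR TwoK2 (StarGraph n) : ℝ) ≤ n + 8 * n * Real.logb 2 n ^ (-(1 / 4 : ℝ)) := by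
  filter_upwards [eventually_exists_wordRel_parameters] with n ⟨p, j, L, hj, hL, hbound⟩
  exact (Nat.cast_le.2 (IR_twoK2_starGraph_le (by nlinarith) hL)).trans hbound

theorem eventually_IR_pathGraph_four_starGraph_le :
    ∀ᶠ n : ℕ in atTop,
      (IR (pathGraph 4) (StarGraph n) : ℝ) ≤ n + 8 * n * Real.logb 2 n ^ (-(1 / 4 : ℝ)) := by
  filter_upwards [eventually_exists_wordRel_parameters] with n ⟨p, j, L, hj, hL, hbound⟩
  exact (Nat.cast_le.2 (IR_pathGraph_four_starGraph_le hj hL)).trans hbound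

/-- The three terms on the left become comparable to `n` once `a` is of order
`x = n ^ (1 / (u + 1))`, and a slack `s` of order `n / x` over `n` on the right side pays for
them. -/
theorem mul_add_add_le_of_pow_eq {u t n a s : ℕ} {x : ℝ} (hx0 : 0 < x) (hx : x ^ (u + 1) = n)
    (hxa : x ≤ a) (hax : a ≤ 2 * x) (hs : (2 * u + t * 2 ^ (u + 1)) * (n / x) ≤ s) (hsn : s ≤ n) :
    u * (n + s) + a * (t * a ^ u) ≤ a * s := by
  have hpow : (a * (t * a ^ u) : ℝ) ≤ t * 2 ^ (u + 1) * n := by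
    calc (a * (t * a ^ u) : ℝ) = t * a ^ (u + 1) := by ring
      _ ≤ t * (2 * x) ^ (u + 1) := by gcongr
      _ = t * 2 ^ (u + 1) * n := by rw [mul_pow, hx]; ring
  have hreal : (u * (n + s) + a * (t * a ^ u) : ℝ) ≤ a * s := by
    calc (u * (n + s) + a * (t * a ^ u) : ℝ)
        ≤ u * (n + n) + t * 2 ^ (u + 1) * n := by gcongr
      _ = x * ((2 * u + t * 2 ^ (u + 1)) * (n / x)) := by field_simp; ring
      _ ≤ a * s := by gcongr
  exact_mod_cast hreal

theorem IR_completeBipartiteGraph_starGraph_le_of_pow_eq {u t n : ℕ} {x : ℝ} (hu : 0 < u)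
    (hx : x ^ (u + 1) = n) (hCx : 2 * u + t * 2 ^ (u + 1) + 1 ≤ x) :
    (IR (completeBipartiteGraph (Fin u) (Fin t)) (StarGraph n) : ℝ) ≤
      n + (2 * u + t * 2 ^ (u + 1) + 3) * (n / x) := by
  set C : ℝ := 2 * u + t * 2 ^ (u + 1)
  have hC : 0 ≤ C := by positivity
  have hx1 : 1 ≤ x := by linarith
  have hxn : x ≤ n / x := by
    rw [le_div_iff₀ (by linarith), ← hx, ← sq]
    exact pow_le_pow_right₀ hx1 (by omega)
  let a := ⌈x⌉₊
  let s := ⌈C * (n / x)⌉₊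
  have hax : (a : ℝ) ≤ 2 * x := by
    linarith [Nat.ceil_lt_add_one (show 0 ≤ x by linarith)]
  have hsx : (s : ℝ) ≤ (C + 1) * (n / x) := by
    linarith [Nat.ceil_lt_add_one (show 0 ≤ C * (n / x) by positivity)]
  have hsn : s ≤ n := by
    have hsn' : (s : ℝ) ≤ n := calc
      (s : ℝ) ≤ x * (n / x) := hsx.trans (by gcongr)
      _ = n := by field_simp
    exact_mod_cast hsn'
  have hcount : u * (n + s) + a * (t * a.choose u) + a * n < a * (n + s + 1) := by
    calc u * (n + s) + a * (t * a.choose u) + a * n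
        ≤ u * (n + s) + a * (t * a ^ u) + a * n := by gcongr; exact Nat.choose_le_pow _ _
      _ ≤ a * s + a * n := by
        gcongr
        exact mul_add_add_le_of_pow_eq (by linarith) hx (Nat.le_ceil _) hax (Nat.le_ceil _) hsn
      _ < a * (n + s + 1) := by linarith [Nat.ceil_pos.2 (show 0 < x by linarith)]
  calc (IR (completeBipartiteGraph (Fin u) (Fin t)) (StarGraph n) : ℝ) ≤ (a + (n + s) : ℕ) := by
        exact_mod_cast IR_completeBipartiteGraph_starGraph_le hcount
    _ ≤ n + (C + 3) * (n / x) := by push_cast; linarith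

theorem exists_eventually_IR_completeBipartiteGraph_starGraph_le {u : ℕ} (hu : 0 < u) (t : ℕ) :
    ∃ c : ℝ, 0 < c ∧ ∀ᶠ n : ℕ in atTop,
      (IR (completeBipartiteGraph (Fin u) (Fin t)) (StarGraph n) : ℝ) ≤
        n + c * (n : ℝ) ^ (1 - 1 / (u + 1 : ℝ)) := by
  have hroot : Tendsto (fun n : ℕ ↦ (n : ℝ) ^ (1 / (u + 1 : ℝ))) atTop atTop :=
    (tendsto_rpow_atTop (by positivity)).comp tendsto_natCast_atTop_atTop
  refine ⟨2 * u + t * 2 ^ (u + 1) + 3, by positivity, ?_⟩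
  filter_upwards [eventually_gt_atTop 0, hroot.eventually_ge_atTop (2 * u + t * 2 ^ (u + 1) + 1)]
    with n hn hCx
  rw [Real.rpow_sub (by exact_mod_cast hn), Real.rpow_one]
  refine IR_completeBipartiteGraph_starGraph_le_of_pow_eq hu ?_ hCx
  rw [one_div]
  exact_mod_cast Real.rpow_inv_natCast_pow n.cast_nonneg u.succ_ne_zero

end Asymptotics

/-- for every t ≥ 2 there are c > 0 and n₀ such that for n > n₀,
IR(2K₂, K_{1,n}) ≤ n + cn·(log₂ n)^{−1/4}, IR(P₄, K_{1,n}) ≤ n + cn·(log₂ n)^{−1/4},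
and IR(K_{t,t}, K_{1,n}) ≤ n + c·n^{1 − 1/(2t)}. -/
theorem IR_upper_small_graphs (t : ℕ) (ht : 2 ≤ t) :
    ∃ c : ℝ, 0 < c ∧ ∃ n₀ : ℕ, ∀ n : ℕ, n₀ < n →
      (IR TwoK2 (StarGraph n) : ℝ) ≤ n + c * n * (Real.logb 2 n) ^ (-(1 / 4 : ℝ)) ∧
      (IR (SimpleGraph.pathGraph 4) (StarGraph n) : ℝ)
        ≤ n + c * n * (Real.logb 2 n) ^ (-(1 / 4 : ℝ)) ∧
      (IR (completeBipartiteGraph (Fin t) (Fin t)) (StarGraph n) : ℝ)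
        ≤ n + c * (n : ℝ) ^ ((1 : ℝ) - 1 / (2 * (t : ℝ))) := by
  obtain ⟨c, hc, hbip⟩ := exists_eventually_IR_completeBipartiteGraph_starGraph_le
    (show 0 < t by omega) t
  obtain ⟨n₀, hn₀⟩ := Filter.eventually_atTop.1
    (eventually_IR_twoK2_starGraph_le.and (eventually_IR_pathGraph_four_starGraph_le.and hbip))
  refine ⟨8 + c, by positivity, max n₀ 1, fun n hn ↦ ?_⟩
  obtain ⟨h2K2, hP4, hKtt⟩ := hn₀ n (by omega)
  have hn1 : (1 : ℝ) ≤ n := by exact_mod_cast (show 1 ≤ n by omega)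
  have hlog : (8 : ℝ) * n * Real.logb 2 n ^ (-(1 / 4 : ℝ)) ≤
      (8 + c) * n * Real.logb 2 n ^ (-(1 / 4 : ℝ)) := by
    have := Real.logb_nonneg one_lt_two hn1
    gcongr
    linarith
  refine ⟨h2K2.trans (by gcongr), hP4.trans (by gcongr), hKtt.trans ?_⟩
  have ht' : (2 : ℝ) ≤ t := by exact_mod_cast ht
  gcongr
  all_goals linarith
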